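/- arXiv:1709.03447 — 5 statements merged into one kernel-verified Lean document; each statement's English description precedes it below -/
import Mathlib

section
/- Let E be a finite-dimensional real inner product space and let P be a linear subspace of E. Let h : ℝ → ℝ be C^∞ on ℝ and assume that all derivatives of odd order of h vanish at 0, i.e. iteratedDeriv (2*j+1) h 0 = 0 for every j ∈ ℕ. Then the radial function f : E → ℝ defined by f(x) = h(dist(x, P)) (the distance from x to the subspace P, equal to the norm of the orthogonal-complement component of x) is C^∞ on all of E. -/
open scoped ContDiff Topology

/-- Differentiation under the integral sign for the averages `t ↦ ∫₀¹ sᵏ u (s t) ds`. -/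
theorem hasDerivAt_integral_pow_mul_comp_mul {u : ℝ → ℝ} (hu : ContDiff ℝ 1 u) (k : ℕ) (t : ℝ) :
    HasDerivAt (fun t => ∫ s in (0 : ℝ)..1, s ^ k * u (s * t))
      (∫ s in (0 : ℝ)..1, s ^ (k + 1) * deriv u (s * t)) t := by
  have hc : Continuous u := hu.continuous
  have hc' : Continuous (deriv u) := hu.continuous_deriv le_rfl
  obtain ⟨C, hC⟩ := (isCompact_closedBall (0 : ℝ) (|t| + 1)).exists_bound_of_continuousOn
    hc'.continuousOn
  refine (intervalIntegral.hasDerivAt_integral_of_dominated_loc_of_deriv_le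
    (F := fun t s => s ^ k * u (s * t)) (F' := fun t s => s ^ (k + 1) * deriv u (s * t))
    (bound := fun _ => C) (Metric.ball_mem_nhds t one_pos) ?_ ?_ ?_ ?_ ?_ ?_).2
  · exact .of_forall fun x => Continuous.aestronglyMeasurable (by fun_prop)
  · exact Continuous.intervalIntegrable (by fun_prop) _ _
  · exact Continuous.aestronglyMeasurable (by fun_prop)
  · refine .of_forall fun s hs x hx => ?_
    rw [Set.uIoc_of_le zero_le_one] at hs
    have hx' : |x| ≤ |t| + 1 := by
      rw [Metric.mem_ball, Real.dist_eq] at hx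
      linarith [abs_sub_abs_le_abs_sub x t]
    have hsx : |s * x| ≤ |t| + 1 := by
      rw [abs_mul, abs_of_pos hs.1]
      exact (mul_le_of_le_one_left (abs_nonneg x) hs.2).trans hx'
    have hs' : |s ^ (k + 1)| ≤ 1 := by
      rw [abs_of_nonneg (pow_nonneg hs.1.le _)]
      exact pow_le_one₀ hs.1.le hs.2
    rw [norm_mul, Real.norm_eq_abs (s ^ (k + 1))]
    exact (mul_le_of_le_one_left (norm_nonneg _) hs').trans (hC _ (by simpa using hsx))
  · exact intervalIntegrable_const
  · refine .of_forall fun s _ x _ => ?_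
    have h₁ : HasDerivAt u (deriv u (s * x)) (s * x) :=
      (hu.differentiable one_ne_zero _).hasDerivAt
    have h₂ : HasDerivAt (fun x => s * x) s x := by simpa using (hasDerivAt_id x).const_mul s
    convert! (h₁.comp x h₂).const_mul (s ^ k) using 1
    ring

theorem ContDiff.iteratedDeriv_of_infty {u : ℝ → ℝ} (hu : ContDiff ℝ ∞ u) (n : ℕ) :
    ContDiff ℝ ∞ (iteratedDeriv n u) := by
  rw [iteratedDeriv_eq_iterate]
  exact hu.iterate_deriv n

theorem iteratedDeriv_integral_comp_mul {u : ℝ → ℝ} (hu : ContDiff ℝ ∞ u) (n : ℕ) :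
    iteratedDeriv n (fun t => ∫ s in (0 : ℝ)..1, u (s * t)) =
      fun t => ∫ s in (0 : ℝ)..1, s ^ n * iteratedDeriv n u (s * t) := by
  induction n with
  | zero => simp
  | succ n ih =>
    ext t
    rw [iteratedDeriv_succ, ih, iteratedDeriv_succ]
    exact (hasDerivAt_integral_pow_mul_comp_mul (hu.iteratedDeriv_of_infty n |>.of_le (by simp)) n t).deriv

theorem contDiff_integral_comp_mul {u : ℝ → ℝ} (hu : ContDiff ℝ ∞ u) :
    ContDiff ℝ ∞ (fun t => ∫ s in (0 : ℝ)..1, u (s * t)) := by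
  refine contDiff_of_differentiable_iteratedDeriv fun n _ => ?_
  rw [iteratedDeriv_integral_comp_mul hu]
  exact fun t => (hasDerivAt_integral_pow_mul_comp_mul
    (hu.iteratedDeriv_of_infty n |>.of_le (by simp)) n t).differentiableAt

/-- Hadamard's lemma, for functions vanishing at the origin. -/
theorem mul_integral_deriv_comp_mul {u : ℝ → ℝ} (hu : ContDiff ℝ 1 u) (hu₀ : u 0 = 0) (t : ℝ) :
    t * ∫ s in (0 : ℝ)..1, deriv u (s * t) = u t := by
  rw [intervalIntegral.mul_integral_comp_mul_right, zero_mul, one_mul,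
    intervalIntegral.integral_deriv_eq_sub (fun x _ => hu.differentiable one_ne_zero x)
      ((hu.continuous_deriv le_rfl).intervalIntegrable _ _), hu₀, sub_zero]

section

variable {E : Type*} [NormedAddCommGroup E] [InnerProductSpace ℝ E]

theorem hasFDerivAt_norm_of_ne_zero {x : E} (hx : x ≠ 0) :
    HasFDerivAt (fun y : E => ‖y‖) (‖x‖⁻¹ • innerSL ℝ x) x := by
  have h := (hasStrictFDerivAt_norm_sq x).hasFDerivAt.sqrt (by simpa using hx)
  simp only [Real.sqrt_sq (norm_nonneg _)] at h
  convert! h using 1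
  ext y
  simp
  field_simp

theorem hasFDerivAt_comp_norm {h g : ℝ → ℝ} (hh : Differentiable ℝ h)
    (hg : ∀ t, t * g t = deriv h t) (x : E) :
    HasFDerivAt (fun y : E => h ‖y‖) (g ‖x‖ • innerSL ℝ x) x := by
  rcases eq_or_ne x 0 with rfl | hx
  · have h₀ : HasDerivAt h 0 0 := by
      simpa [← hg 0] using (hh 0).hasDerivAt
    rw [hasDerivAt_iff_isLittleO] at h₀
    have hn : Filter.Tendsto (fun y : E => ‖y‖) (𝓝 0) (𝓝 0) := by
      simpa using (continuous_norm (E := E)).tendsto 0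
    have := h₀.comp_tendsto hn
    rw [hasFDerivAt_iff_isLittleO]
    rw [← Asymptotics.isLittleO_norm_right]
    simpa only [Function.comp_def, norm_zero, sub_zero, smul_zero, map_zero, smul_eq_mul,
      mul_zero, zero_apply] using this
  · convert! (hh ‖x‖).hasDerivAt.comp_hasFDerivAt x (hasFDerivAt_norm_of_ne_zero hx) using 1
    rw [← hg, smul_smul]
    congr 1
    field_simp

theorem contDiff_comp_norm {h : ℝ → ℝ} (hh : ContDiff ℝ ∞ h)
    (hodd : ∀ j : ℕ, iteratedDeriv (2 * j + 1) h 0 = 0) :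
    ContDiff ℝ ∞ (fun x : E => h ‖x‖) := by
  refine contDiff_iff_forall_nat_le.2 fun n _ => ?_
  induction n generalizing h with
  | zero => exact contDiff_zero.2 (hh.continuous.comp continuous_norm)
  | succ n ih =>
    have hd : ContDiff ℝ ∞ (deriv h) := (contDiff_infty_iff_deriv.1 hh).2
    have hdd : ContDiff ℝ ∞ (deriv (deriv h)) := (contDiff_infty_iff_deriv.1 hd).2
    refine contDiff_succ_iff_hasFDerivAt.2 ⟨_, ?_, hasFDerivAt_comp_norm
      (hh.differentiable (by simp)) (mul_integral_deriv_comp_mul (hd.of_le (by simp))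
        (by simpa using hodd 0))⟩
    refine (ih (contDiff_integral_comp_mul hdd) (fun j => ?_) (by simp)).smul
      (innerSL ℝ : E →L[ℝ] E →L[ℝ] ℝ).contDiff
    have hj : iteratedDeriv (2 * j + 1) (deriv (deriv h)) 0 = 0 := by
      simpa only [mul_add, mul_one, iteratedDeriv_succ'] using hodd (j + 1)
    rw [iteratedDeriv_integral_comp_mul hdd]
    simp [hj]

theorem Submodule.infDist_eq_norm_starProjection_orthogonal (P : Submodule ℝ E)
    [P.HasOrthogonalProjection] (x : E) :
    Metric.infDist x (P : Set E) = ‖Pᗮ.starProjection x‖ := by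
  rw [Metric.infDist_eq_iInf, Submodule.starProjection_orthogonal_val,
    Submodule.starProjection_minimal]
  simp [dist_eq_norm]


end

/-- **Smoothness of radial functions (Euclidean case).**
Let `E` be a finite-dimensional real inner product space and `P` a linear subspace of `E`.
If `h : ℝ → ℝ` is `C^∞` and all its odd-order derivatives vanish at `0`, then the radial
function `x ↦ h (dist(x, P))` is `C^∞` on all of `E`. -/
theorem radial_function_smooth
    {E : Type*} [NormedAddCommGroup E] [InnerProductSpace ℝ E] [FiniteDimensional ℝ E]
    (P : Submodule ℝ E) (h : ℝ → ℝ)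
    (hh : ContDiff ℝ (⊤ : ℕ∞) h)
    (hodd : ∀ j : ℕ, iteratedDeriv (2 * j + 1) h 0 = 0) :
    ContDiff ℝ (⊤ : ℕ∞) (fun x : E => h (Metric.infDist x (P : Set E))) := by
  simp_rw [P.infDist_eq_norm_starProjection_orthogonal]
  exact (contDiff_comp_norm hh hodd).comp (Pᗮ.starProjection).contDiff
end

section
/- Let n ≥ 1, let E = EuclideanSpace ℝ (Fin n), and let σ denote the canonical surface measure on the unit sphere S = {ω ∈ E : ‖ω‖ = 1}. Let f : E → ℝ be C^∞. Then the radialization Af : E → ℝ defined by (Af)(x) = ⨍_S f(‖x‖ • ω) dσ(ω) is C^∞ on all of E (including at x = 0). -/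
open MeasureTheory

/-- Differentiation under the integral sign for a parametric integral over a compact space whose
integrand is the restriction of a smooth function. -/
theorem ContDiff.hasDerivAt_integral_of_compactSpace {E K : Type*} [NormedAddCommGroup E]
    [NormedSpace ℝ E] [TopologicalSpace K] [CompactSpace K] [MeasurableSpace K]
    [OpensMeasurableSpace K] (μ : Measure K) [IsFiniteMeasure μ] {ι : K → E} (hι : Continuous ι)
    {H : ℝ × E → ℝ} (hH : ContDiff ℝ 1 H) (r : ℝ) :
    HasDerivAt (fun r ↦ ∫ ω, H (r, ι ω) ∂μ) (∫ ω, fderiv ℝ H (r, ι ω) (1, 0) ∂μ) r := by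
  have hH' : Continuous fun p ↦ fderiv ℝ H p (1, 0) :=
    (hH.continuous_fderiv one_ne_zero).clm_apply continuous_const
  have hcont (r : ℝ) : Continuous fun ω ↦ H (r, ι ω) := by
    have := hH.continuous
    fun_prop
  have hcont' (r : ℝ) : Continuous fun ω ↦ fderiv ℝ H (r, ι ω) (1, 0) :=
    hH'.comp (by fun_prop)
  obtain ⟨C, hC⟩ := ((isCompact_closedBall r 1).prod
    (isCompact_range hι)).exists_bound_of_continuousOn hH'.continuousOn
  refine (hasDerivAt_integral_of_dominated_loc_of_deriv_le (bound := fun _ ↦ C)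
    (Metric.closedBall_mem_nhds r one_pos)
    (.of_forall fun x ↦ (hcont x).aestronglyMeasurable)
    ((hcont r).integrable_of_hasCompactSupport (.of_compactSpace _))
    (hcont' r).aestronglyMeasurable
    (.of_forall fun ω x hx ↦ hC (x, ι ω) ⟨hx, ω, rfl⟩) (integrable_const C)
    (.of_forall fun ω x _ ↦ ?_)).2
  exact (hH.differentiable one_ne_zero _).hasFDerivAt.comp_hasDerivAt x
    ((hasDerivAt_id x).prodMk (hasDerivAt_const x (ι ω)))

/-- A parametric integral over a compact space is smooth in a real parameter if its integrand is the
restriction of a smooth function. -/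
theorem ContDiff.integral_of_compactSpace {E K : Type*} [NormedAddCommGroup E]
    [NormedSpace ℝ E] [TopologicalSpace K] [CompactSpace K] [MeasurableSpace K]
    [OpensMeasurableSpace K] (μ : Measure K) [IsFiniteMeasure μ] {ι : K → E} (hι : Continuous ι)
    {H : ℝ × E → ℝ} (hH : ContDiff ℝ (⊤ : ℕ∞) H) :
    ContDiff ℝ (⊤ : ℕ∞) fun r ↦ ∫ ω, H (r, ι ω) ∂μ := by
  rw [contDiff_infty]
  intro k
  induction k generalizing H with
  | zero =>
    have hderiv := (hH.of_le (by norm_cast)).hasDerivAt_integral_of_compactSpace μ hι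
    exact contDiff_zero.2 <| continuous_iff_continuousAt.2 fun r ↦ (hderiv r).continuousAt
  | succ k ih =>
    have hderiv := (hH.of_le (by norm_cast)).hasDerivAt_integral_of_compactSpace μ hι
    push_cast
    refine contDiff_succ_iff_deriv.2 ⟨fun r ↦ (hderiv r).differentiableAt, by simp, ?_⟩
    rw [funext fun r ↦ (hderiv r).deriv]
    exact ih ((hH.fderiv_right (m := (⊤ : ℕ∞)) (by simp)).clm_apply contDiff_const)

theorem Function.Even.deriv_zero {φ : ℝ → ℝ} (hφ : φ.Even) : deriv φ 0 = 0 := by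
  have h := deriv_comp_neg φ 0
  rw [show (fun x ↦ φ (-x)) = φ from funext hφ, neg_zero] at h
  linarith

/-- The derivative of a smooth even function is the product of the identity with a smooth even
function. -/
theorem Function.Even.exists_deriv_eq_mul {φ : ℝ → ℝ} (heven : φ.Even)
    (hφ : ContDiff ℝ (⊤ : ℕ∞) φ) :
    ∃ ψ : ℝ → ℝ, ψ.Even ∧ ContDiff ℝ (⊤ : ℕ∞) ψ ∧ ∀ r, deriv φ r = ψ r * r := by
  have hφ' : ContDiff ℝ (⊤ : ℕ∞) (deriv φ) := (contDiff_infty_iff_deriv.1 hφ).2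
  have hφ'' : ContDiff ℝ (⊤ : ℕ∞) (deriv (deriv φ)) := (contDiff_infty_iff_deriv.1 hφ').2
  have hodd (r : ℝ) : deriv φ (-r) = -deriv φ r := by
    have h := deriv_comp_neg φ r
    rw [show (fun x ↦ φ (-x)) = φ from funext heven] at h
    linarith
  have heven'' (r : ℝ) : deriv (deriv φ) (-r) = deriv (deriv φ) r := by
    have h := deriv_comp_neg (deriv φ) r
    rw [show (fun x ↦ deriv φ (-x)) = fun x ↦ -deriv φ x from funext hodd, deriv.fun_neg] at h
    linarith
  refine ⟨fun r ↦ ∫ s : Set.Icc (0 : ℝ) 1, deriv (deriv φ) (r * s) ∂(volume.comap Subtype.val),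
    fun r ↦ by simp [heven''], ?_, fun r ↦ ?_⟩
  · have : IsFiniteMeasure ((volume : Measure ℝ).comap (Subtype.val : Set.Icc (0 : ℝ) 1 → ℝ)) :=
      inferInstanceAs (IsFiniteMeasure (volume : Measure (Set.Icc (0 : ℝ) 1)))
    exact ContDiff.integral_of_compactSpace _ continuous_subtype_val
      (H := fun p : ℝ × ℝ ↦ deriv (deriv φ) (p.1 * p.2))
      (hφ''.comp (contDiff_fst.mul contDiff_snd))
  · simp only []
    rw [integral_subtype_comap measurableSet_Icc fun s ↦ deriv (deriv φ) (r * s),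
      integral_Icc_eq_integral_Ioc, ← intervalIntegral.integral_of_le zero_le_one,
      ← intervalIntegral.integral_mul_const,
      intervalIntegral.integral_eq_sub_of_hasDerivAt (f := fun s ↦ deriv φ (r * s))]
    · simp [heven.deriv_zero]
    · intro s _
      exact (hφ'.differentiable (by simp) _).hasDerivAt.comp s
        (by simpa using (hasDerivAt_id s).const_mul r)
    · have := hφ''.continuous
      exact Continuous.intervalIntegrable (by fun_prop) _ _

theorem hasFDerivAt_comp_norm_s3 {E : Type*} [NormedAddCommGroup E] [InnerProductSpace ℝ E]
    {φ ψ : ℝ → ℝ} (h : ∀ r, HasDerivAt φ (ψ r * r) r) (x : E) :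
    HasFDerivAt (fun x ↦ φ ‖x‖) (ψ ‖x‖ • innerSL ℝ x) x := by
  rcases eq_or_ne x 0 with rfl | hx
  · have h₀ : HasDerivAt φ 0 ‖(0 : E)‖ := by simpa using h 0
    have h₁ := h₀.isLittleO.comp_tendsto (continuous_norm.tendsto (0 : E))
    rw [hasFDerivAt_iff_isLittleO]
    refine Asymptotics.IsLittleO.of_norm_right ?_
    simpa [Function.comp_def] using h₁
  · have hnorm : HasFDerivAt (fun x : E ↦ ‖x‖) (‖x‖⁻¹ • innerSL ℝ x) x := by
      have h₁ := (hasStrictFDerivAt_norm_sq x).hasFDerivAt.sqrt (by simpa using hx)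
      simp only [Real.sqrt_sq (norm_nonneg _)] at h₁
      convert h₁ using 1
      ext y
      simp
      field_simp
    have h₂ := (h ‖x‖).comp_hasFDerivAt x hnorm
    rwa [smul_smul, mul_assoc, mul_inv_cancel₀ (norm_ne_zero_iff.2 hx), mul_one] at h₂

/-- A smooth even function of the norm is smooth. -/
theorem Function.Even.contDiff_comp_norm {E : Type*} [NormedAddCommGroup E]
    [InnerProductSpace ℝ E] {φ : ℝ → ℝ} (heven : φ.Even) (hφ : ContDiff ℝ (⊤ : ℕ∞) φ) :
    ContDiff ℝ (⊤ : ℕ∞) fun x : E ↦ φ ‖x‖ := by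
  rw [contDiff_infty]
  intro k
  induction k generalizing φ with
  | zero => exact contDiff_zero.2 (hφ.continuous.comp continuous_norm)
  | succ k ih =>
    obtain ⟨ψ, hψeven, hψ, hderiv⟩ := heven.exists_deriv_eq_mul hφ
    push_cast
    exact contDiff_succ_iff_hasFDerivAt.2 ⟨fun x ↦ ψ ‖x‖ • innerSL ℝ x,
      (ih hψeven hψ).smul (innerSL ℝ).contDiff,
      hasFDerivAt_comp_norm_s3 fun r ↦ hderiv r ▸ (hφ.differentiable (by simp) r).hasDerivAt⟩

/-- The sphere measure of a symmetric measure is symmetric. -/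
theorem MeasureTheory.Measure.measurePreserving_neg_toSphere {E : Type*} [NormedAddCommGroup E]
    [NormedSpace ℝ E] [MeasurableSpace E] [BorelSpace E] (μ : Measure E) [μ.IsNegInvariant] :
    MeasurePreserving (fun ω : Metric.sphere (0 : E) 1 ↦ -ω) μ.toSphere μ.toSphere := by
  have hmeas : Measurable fun ω : Metric.sphere (0 : E) 1 ↦ -ω := continuous_neg.measurable
  refine ⟨hmeas, Measure.ext fun s hs ↦ ?_⟩
  rw [Measure.map_apply hmeas hs, μ.toSphere_apply' (hmeas hs), μ.toSphere_apply' hs,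
    ← measure_neg μ]
  congr 2
  ext x
  simp only [Set.mem_neg, Set.mem_smul, Set.mem_image]
  constructor
  · rintro ⟨a, ha, _, ⟨ω, hω, rfl⟩, h⟩
    exact ⟨a, ha, _, ⟨-ω, hω, rfl⟩, by simp [h]⟩
  · rintro ⟨a, ha, _, ⟨ω, hω, rfl⟩, h⟩
    exact ⟨a, ha, _, ⟨-ω, by simpa using hω, rfl⟩, by simp [h]⟩

/-- **Smoothness of the radialization (Euclidean ball case).** For `f : EuclideanSpace ℝ (Fin n) → ℝ`
`C^∞`, the radialization `(Af)(x) = ⨍_S f (‖x‖ • ω) dσ(ω)` (average over the unit sphere with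
respect to the canonical surface measure) is `C^∞` on all of `E`, including at `x = 0`. -/
theorem radialization_smooth
    (n : ℕ) (hn : 1 ≤ n)
    (f : EuclideanSpace ℝ (Fin n) → ℝ) (hf : ContDiff ℝ (⊤ : ℕ∞) f) :
    ContDiff ℝ (⊤ : ℕ∞) (fun x : EuclideanSpace ℝ (Fin n) =>
      ⨍ ω : Metric.sphere (0 : EuclideanSpace ℝ (Fin n)) 1,
        f (‖x‖ • (ω : EuclideanSpace ℝ (Fin n)))
        ∂((volume : Measure (EuclideanSpace ℝ (Fin n))).toSphere)) := by
  simp only [average_eq]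
  refine .const_smul _ (Function.Even.contDiff_comp_norm
    (E := EuclideanSpace ℝ (Fin n)) (φ := fun r ↦ ∫ ω : Metric.sphere (0 : EuclideanSpace ℝ (Fin n)) 1,
      f (r • (ω : EuclideanSpace ℝ (Fin n))) ∂volume.toSphere) (fun r ↦ ?_) ?_)
  · have h := (Measure.measurePreserving_neg_toSphere volume).integral_comp
      (Homeomorph.neg _).measurableEmbedding
      fun ω : Metric.sphere (0 : EuclideanSpace ℝ (Fin n)) 1 ↦ f (r • ω.1)
    simpa using h
  · exact ContDiff.integral_of_compactSpace _ continuous_subtype_val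
      (H := fun p : ℝ × EuclideanSpace ℝ (Fin n) ↦ f (p.1 • p.2))
      (hf.comp (contDiff_fst.smul contDiff_snd))
end

section
/- Let n ≥ 1, let E = EuclideanSpace ℝ (Fin n), and let σ denote the canonical surface measure on the unit sphere S = {ω ∈ E : ‖ω‖ = 1}. Let f : E → ℝ be C^∞, and let Δ denote the (analyst's) Laplacian on E, i.e. the sum of the pure second directional derivatives along an orthonormal basis. Then the radialization commutes with the Laplacian: for every x ∈ E, Δ(Af)(x) = (A(Δf))(x), where (Ag)(x) = ⨍_S g(‖x‖ • ω) dσ(ω) for any function g. -/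
open MeasureTheory

/-- The analyst's Laplacian on `EuclideanSpace ℝ (Fin n)`: the sum of the pure second
directional derivatives along the standard orthonormal basis. -/
noncomputable def laplacian {n : ℕ} (f : EuclideanSpace ℝ (Fin n) → ℝ)
    (x : EuclideanSpace ℝ (Fin n)) : ℝ :=
  ∑ i : Fin n, iteratedFDeriv ℝ 2 f x
    ![EuclideanSpace.single i (1 : ℝ), EuclideanSpace.single i (1 : ℝ)]

/-- The radialization operator: `(Ag)(x)` is the average of `g` over the sphere of radius `‖x‖`
centered at the origin, with respect to the canonical surface measure on the unit sphere. -/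
noncomputable def radialization {n : ℕ} (g : EuclideanSpace ℝ (Fin n) → ℝ)
    (x : EuclideanSpace ℝ (Fin n)) : ℝ :=
  ⨍ ω : Metric.sphere (0 : EuclideanSpace ℝ (Fin n)) 1,
    g (‖x‖ • (ω : EuclideanSpace ℝ (Fin n)))
    ∂((volume : Measure (EuclideanSpace ℝ (Fin n))).toSphere)

open Set Metric Topology
open scoped Pointwise

/-- Differentiation under the integral sign over a compact space, for an integrand which is
jointly continuous together with its derivative. -/
theorem hasFDerivAt_integral_of_continuous {K H F : Type*} [TopologicalSpace K] [CompactSpace K]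
    [MeasurableSpace K] [OpensMeasurableSpace K] [SecondCountableTopology K]
    [NormedAddCommGroup H] [NormedSpace ℝ H] [ProperSpace H]
    [NormedAddCommGroup F] [NormedSpace ℝ F]
    (μ : Measure K) [IsFiniteMeasure μ] {φ : H → K → F} {φ' : H → K → H →L[ℝ] F}
    (hφ : Continuous (Function.uncurry φ)) (hφ' : Continuous (Function.uncurry φ'))
    (hd : ∀ x k, HasFDerivAt (φ · k) (φ' x k) x) (x : H) :
    HasFDerivAt (fun y ↦ ∫ k, φ y k ∂μ) (∫ k, φ' x k ∂μ) x := by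
  obtain ⟨C, hC⟩ :=
    ((isCompact_closedBall x 1).prod (isCompact_univ (X := K))).exists_bound_of_continuousOn
      hφ'.continuousOn
  have hcont (y : H) : Continuous (φ y) := hφ.comp (Continuous.prodMk_right y)
  have hcont' (y : H) : Continuous (φ' y) := hφ'.comp (Continuous.prodMk_right y)
  refine hasFDerivAt_integral_of_dominated_of_fderiv_le (bound := fun _ ↦ C)
    (closedBall_mem_nhds x one_pos)
    (.of_forall fun y ↦ (hcont y).aestronglyMeasurable_of_compactSpace)
    ?_ (hcont' x).aestronglyMeasurable_of_compactSpace
    (.of_forall fun k y hy ↦ hC (y, k) ⟨hy, mem_univ k⟩) (integrable_const C)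
    (.of_forall fun k y _ ↦ hd y k)
  exact (hcont x).integrable_of_hasCompactSupport (HasCompactSupport.of_compactSpace _)

/-- Evaluation of a continuous family of linear maps commutes with integration over a compact
space. -/
theorem integral_apply_of_continuous {K H F : Type*} [TopologicalSpace K] [CompactSpace K]
    [MeasurableSpace K] [OpensMeasurableSpace K] [SecondCountableTopology K]
    [NormedAddCommGroup H] [NormedSpace ℝ H] [NormedAddCommGroup F] [NormedSpace ℝ F]
    (μ : Measure K) [IsFiniteMeasure μ] {T : K → H →L[ℝ] F} (hT : Continuous T) (v : H) :
    (∫ k, T k ∂μ) v = ∫ k, T k v ∂μ :=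
  ContinuousLinearMap.integral_apply
    (hT.integrable_of_hasCompactSupport (HasCompactSupport.of_compactSpace _)) v

theorem integral_apply_apply_of_continuous {K H : Type*} [TopologicalSpace K] [CompactSpace K]
    [MeasurableSpace K] [OpensMeasurableSpace K] [SecondCountableTopology K]
    [NormedAddCommGroup H] [NormedSpace ℝ H] (μ : Measure K) [IsFiniteMeasure μ]
    {T : K → H →L[ℝ] H →L[ℝ] ℝ} (hT : Continuous T) (v w : H) :
    (∫ k, T k ∂μ) v w = ∫ k, T k v w ∂μ := by
  rw [integral_apply_of_continuous μ hT, integral_apply_of_continuous μ (by fun_prop)]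

section InnerProductSpace

variable {E : Type*} [NormedAddCommGroup E] [InnerProductSpace ℝ E]

/-- The second derivative of `f ∘ u`, for a continuous linear map `u`. -/
noncomputable def hessianComp (f : E → ℝ) (y : E) (u : E →L[ℝ] E) : E →L[ℝ] E →L[ℝ] ℝ :=
  ((ContinuousLinearMap.compL ℝ E E ℝ).flip u).comp ((fderiv ℝ (fderiv ℝ f) (u y)).comp u)

theorem continuous_hessianComp {X : Type*} [TopologicalSpace X] {f : E → ℝ} (hf : ContDiff ℝ 2 f)
    {y : X → E} (hy : Continuous y) {u : X → E →L[ℝ] E} (hu : Continuous u) :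
    Continuous fun p ↦ hessianComp f (y p) (u p) := by
  have hf1 : ContDiff ℝ 1 (fderiv ℝ f) := hf.fderiv_right (by norm_num)
  have hD2 : Continuous (fderiv ℝ (fderiv ℝ f)) := hf1.continuous_fderiv one_ne_zero
  unfold hessianComp
  fun_prop

variable [FiniteDimensional ℝ E]

instance unitary.instCompactSpaceContinuousLinearMap : CompactSpace (unitary (E →L[ℝ] E)) := by
  have : ProperSpace (E →L[ℝ] E) := FiniteDimensional.proper ℝ _
  refine isCompact_iff_compactSpace.mp
    ((isCompact_closedBall (0 : E →L[ℝ] E) 1).of_isClosed_subset isClosed_unitary fun u hu ↦ ?_)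
  rw [mem_closedBall_zero_iff]
  refine u.opNorm_le_bound zero_le_one fun x ↦ ?_
  simpa using (ContinuousLinearMap.norm_map_of_mem_unitary hu x).le

/-- The action of a linear isometry on the unit sphere. -/
def LinearIsometryEquiv.sphereHomeomorph (e : E ≃ₗᵢ[ℝ] E) : sphere (0 : E) 1 ≃ₜ sphere (0 : E) 1 :=
  e.toHomeomorph.subtype fun x ↦ by simp

theorem exists_unitary_apply_eq {x y : E} (h : ‖x‖ = ‖y‖) :
    ∃ u : unitary (E →L[ℝ] E), (u : E →L[ℝ] E) x = y := by
  refine ⟨Unitary.linearIsometryEquiv.symm (Submodule.reflection (ℝ ∙ (x - y))ᗮ), ?_⟩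
  simpa using Submodule.reflection_sub h

open Laplacian

theorem ContDiff.continuous_laplacian {f : E → ℝ} (hf : ContDiff ℝ 2 f) : Continuous (Δ f) := by
  have h : Continuous (iteratedFDeriv ℝ 2 f) := hf.continuous_iteratedFDeriv le_rfl
  rw [InnerProductSpace.laplacian_eq_iteratedFDeriv_stdOrthonormalBasis]
  fun_prop

/-- The Laplacian is invariant under linear isometries. -/
theorem sum_hessianComp_unitary (f : E → ℝ)
    (b : OrthonormalBasis (Fin (Module.finrank ℝ E)) ℝ E) (x : E) (u : unitary (E →L[ℝ] E)) :
    ∑ i, hessianComp f x u.1 (b i) (b i) = Δ f (u.1 x) := by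
  rw [InnerProductSpace.laplacian_eq_iteratedFDeriv_orthonormalBasis f
    (b.map (Unitary.linearIsometryEquiv u))]
  simp only [iteratedFDeriv_two_apply]
  rfl

section UnitaryAverage

variable [MeasurableSpace (unitary (E →L[ℝ] E))] [BorelSpace (unitary (E →L[ℝ] E))]
  (μ : Measure (unitary (E →L[ℝ] E))) [IsFiniteMeasure μ] {f : E → ℝ}

theorem fderiv_integral_unitary (hf : ContDiff ℝ 1 f) :
    fderiv ℝ (fun y ↦ ∫ u, f (u.1 y) ∂μ) = fun y ↦ ∫ u, (fderiv ℝ f (u.1 y)).comp u.1 ∂μ := by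
  have hD0 : Continuous f := hf.continuous
  have hD1 : Continuous (fderiv ℝ f) := hf.continuous_fderiv one_ne_zero
  ext1 y
  refine (hasFDerivAt_integral_of_continuous μ (φ := fun y u ↦ f (u.1 y))
    (φ' := fun y u ↦ (fderiv ℝ f (u.1 y)).comp u.1) ?_ ?_ (fun z u ↦ ?_) y).fderiv
  · simp only [Function.uncurry_def]
    fun_prop
  · simp only [Function.uncurry_def]
    fun_prop
  · exact ((hf.differentiable one_ne_zero) _).hasFDerivAt.comp z u.1.hasFDerivAt

theorem fderiv_fderiv_integral_unitary (hf : ContDiff ℝ 2 f) (x : E) :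
    fderiv ℝ (fderiv ℝ (fun y ↦ ∫ u, f (u.1 y) ∂μ)) x = ∫ u, hessianComp f x u.1 ∂μ := by
  have hf1 : ContDiff ℝ 1 (fderiv ℝ f) := hf.fderiv_right (by norm_num)
  have hD1 : Continuous (fderiv ℝ f) := hf1.continuous
  rw [fderiv_integral_unitary μ (hf.of_le one_le_two)]
  refine (hasFDerivAt_integral_of_continuous μ (φ := fun y u ↦ (fderiv ℝ f (u.1 y)).comp u.1)
    (φ' := fun y u ↦ hessianComp f y u.1) ?_
    (continuous_hessianComp hf continuous_fst (continuous_subtype_val.comp continuous_snd))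
    (fun z u ↦ ?_) x).fderiv
  · simp only [Function.uncurry_def]
    fun_prop
  · exact ((ContinuousLinearMap.compL ℝ E E ℝ).flip u.1).hasFDerivAt.comp z
      (((hf1.differentiable one_ne_zero) _).hasFDerivAt.comp z u.1.hasFDerivAt)

/-- Averaging over the orthogonal group commutes with the Laplacian. -/
theorem laplacian_integral_unitary (hf : ContDiff ℝ 2 f) (x : E) :
    Δ (fun y ↦ ∫ u, f (u.1 y) ∂μ) x = ∫ u, Δ f (u.1 x) ∂μ := by
  have hcont : Continuous fun u : unitary (E →L[ℝ] E) ↦ hessianComp f x u.1 :=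
    continuous_hessianComp hf continuous_const continuous_subtype_val
  let b := stdOrthonormalBasis ℝ E
  rw [InnerProductSpace.laplacian_eq_iteratedFDeriv_orthonormalBasis _ b]
  simp only [iteratedFDeriv_two_apply, fderiv_fderiv_integral_unitary μ hf,
    Matrix.cons_val_zero, Matrix.cons_val_one, integral_apply_apply_of_continuous μ hcont]
  rw [← integral_finsetSum _ fun i _ ↦ Continuous.integrable_of_hasCompactSupport
    (by fun_prop) (HasCompactSupport.of_compactSpace _)]
  simp_rw [sum_hessianComp_unitary]

end UnitaryAverage

variable [MeasurableSpace E] [BorelSpace E]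

/-- Linear isometries preserve the surface measure of the unit sphere. -/
theorem LinearIsometryEquiv.measurePreserving_sphereHomeomorph (e : E ≃ₗᵢ[ℝ] E) :
    MeasurePreserving e.sphereHomeomorph (volume : Measure E).toSphere
      (volume : Measure E).toSphere := by
  refine ⟨e.sphereHomeomorph.measurable, Measure.ext fun s hs ↦ ?_⟩
  have hm := e.sphereHomeomorph.measurable
  rw [Measure.map_apply hm hs, Measure.toSphere_apply' _ (hm hs), Measure.toSphere_apply' _ hs,
    ← e.measurePreserving.measure_preimage_emb e.toHomeomorph.measurableEmbedding
      (Ioo (0 : ℝ) 1 • (Subtype.val '' s))]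
  congr 2
  ext x
  simp only [mem_smul, mem_image, mem_preimage]
  constructor
  · rintro ⟨r, hr, _, ⟨ω, hω, rfl⟩, rfl⟩
    exact ⟨r, hr, e ω, ⟨_, hω, rfl⟩, (e.map_smul r ω).symm⟩
  · rintro ⟨r, hr, _, ⟨ω, hω, rfl⟩, h⟩
    refine ⟨r, hr, e.symm ω, ⟨e.sphereHomeomorph.symm ω, by simpa using hω, rfl⟩, ?_⟩
    exact e.injective (by simpa using h)

/-- Averaging over a sphere centered at the origin agrees with averaging over the orthogonal
group. -/
theorem average_toSphere_eq_integral_unitary [Nontrivial E]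
    [MeasurableSpace (unitary (E →L[ℝ] E))] [BorelSpace (unitary (E →L[ℝ] E))]
    (μ : Measure (unitary (E →L[ℝ] E))) [μ.IsMulRightInvariant] [IsProbabilityMeasure μ]
    {g : E → ℝ} (hg : Continuous g) (x : E) :
    ⨍ ω : sphere (0 : E) 1, g (‖x‖ • (ω : E)) ∂(volume : Measure E).toSphere =
      ∫ u, g (u.1 x) ∂μ := by
  have hconst (ω : sphere (0 : E) 1) :
      ∫ u, g (u.1 (‖x‖ • (ω : E))) ∂μ = ∫ u, g (u.1 x) ∂μ := by
    obtain ⟨v, hv⟩ := exists_unitary_apply_eq (x := x) (y := ‖x‖ • (ω : E)) (by simp [norm_smul])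
    rw [← integral_mul_right_eq_self (fun u ↦ g (u.1 x)) v, ← hv]
    rfl
  have hrot (u : unitary (E →L[ℝ] E)) :
      ⨍ ω : sphere (0 : E) 1, g (u.1 (‖x‖ • (ω : E))) ∂(volume : Measure E).toSphere =
        ⨍ ω : sphere (0 : E) 1, g (‖x‖ • (ω : E)) ∂(volume : Measure E).toSphere := by
    let e := (Unitary.linearIsometryEquiv u).sphereHomeomorph
    have he (ω : sphere (0 : E) 1) : ((e ω : sphere (0 : E) 1) : E) = u.1 ω := rfl
    have h : MeasurePreserving e _ _ :=
      (Unitary.linearIsometryEquiv u).measurePreserving_sphereHomeomorph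
    rw [average_eq, average_eq,
      ← h.integral_comp e.measurableEmbedding (fun ω ↦ g (‖x‖ • (ω : E)))]
    simp only [he, map_smul]
  have : NeZero (volume : Measure E).toSphere := ⟨Measure.toSphere_ne_zero _⟩
  calc
    _ = ∫ u : unitary (E →L[ℝ] E), ⨍ ω : sphere (0 : E) 1, g (u.1 (‖x‖ • (ω : E)))
          ∂(volume : Measure E).toSphere ∂μ := by simp_rw [hrot]; simp
    _ = ⨍ ω : sphere (0 : E) 1, ∫ u : unitary (E →L[ℝ] E), g (u.1 (‖x‖ • (ω : E))) ∂μ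
          ∂(volume : Measure E).toSphere := by
      simp only [average]
      apply integral_integral_swap
      apply Continuous.integrable_of_hasCompactSupport _ (HasCompactSupport.of_compactSpace _)
      simp only [Function.uncurry_def]
      fun_prop
    _ = _ := by simp_rw [hconst]; simp

/-- Spherical averages commute with the Laplacian. -/
theorem laplacian_average_toSphere [Nontrivial E] {f : E → ℝ} (hf : ContDiff ℝ 2 f) (x : E) :
    Δ (fun y : E ↦ ⨍ ω : sphere (0 : E) 1, f (‖y‖ • (ω : E)) ∂(volume : Measure E).toSphere) x =
      ⨍ ω : sphere (0 : E) 1, Δ f (‖x‖ • (ω : E)) ∂(volume : Measure E).toSphere := by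
  borelize ↥(unitary (E →L[ℝ] E))
  let μ : Measure (unitary (E →L[ℝ] E)) := (Measure.haarMeasure ⊤).inv
  have : IsProbabilityMeasure μ := by
    have : IsProbabilityMeasure (Measure.haarMeasure (⊤ : TopologicalSpace.PositiveCompacts
      (unitary (E →L[ℝ] E)))) := ⟨Measure.haarMeasure_self⟩
    exact Measure.isProbabilityMeasure_map measurable_inv.aemeasurable
  simp_rw [average_toSphere_eq_integral_unitary μ hf.continuous,
    average_toSphere_eq_integral_unitary μ hf.continuous_laplacian]
  exact laplacian_integral_unitary μ hf x

end InnerProductSpace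

theorem laplacian_eq_innerProductSpace_laplacian {n : ℕ} (f : EuclideanSpace ℝ (Fin n) → ℝ) :
    laplacian f = Laplacian.laplacian f := by
  rw [InnerProductSpace.laplacian_eq_iteratedFDeriv_orthonormalBasis f
    (EuclideanSpace.basisFun (Fin n) ℝ)]
  simp [funext_iff, laplacian]

/-- **Radialization commutes with the Laplacian (Euclidean ball case).** For a `C^∞` function
`f` on `EuclideanSpace ℝ (Fin n)`, one has `Δ(Af) = A(Δf)` everywhere. -/
theorem laplacian_radialization_comm
    (n : ℕ) (hn : 1 ≤ n)
    (f : EuclideanSpace ℝ (Fin n) → ℝ) (hf : ContDiff ℝ (⊤ : ℕ∞) f) :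
    ∀ x : EuclideanSpace ℝ (Fin n),
      laplacian (radialization f) x = radialization (laplacian f) x := by
  intro x
  have : NeZero n := ⟨by lia⟩
  rw [laplacian_eq_innerProductSpace_laplacian, laplacian_eq_innerProductSpace_laplacian]
  exact laplacian_average_toSphere (hf.of_le (by norm_cast)) x
end

section
/- Let R > 0 and d ∈ ℕ. Let θ : ℝ → ℝ be C^∞, with θ(r) > 0 for all r ∈ [0,R), and suppose θ vanishes to exact order d at R: iteratedDeriv j θ R = 0 for all j < d, and iteratedDeriv d θ R ≠ 0. Define q : ℝ → ℝ by q(r) = (∫_{s=r}^{R} θ(s) ds) / θ(r). Then the derivative of q tends to −1/(d+1) as r → R from the left: Tendsto (deriv q) (𝓝[<] R) (𝓝 (−1/(d+1))). -/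
open Filter Topology in
/-- A function whose derivatives of order less than `n` vanish at `a` is, to leading order,
`f⁽ⁿ⁾(a) / n! * (x - a) ^ n`. -/
theorem tendsto_div_pow_of_iteratedDeriv_eq_zero {f : ℝ → ℝ} {a : ℝ} {n : ℕ}
    (hf : ContDiff ℝ n f) (h : ∀ j < n, iteratedDeriv j f a = 0) :
    Tendsto (fun x => f x / (x - a) ^ n) (𝓝[≠] a) (𝓝 (iteratedDeriv n f a / n.factorial)) := by
  have hT : ∀ x, taylorWithinEval f n Set.univ a x
      = iteratedDeriv n f a / n.factorial * (x - a) ^ n := by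
    intro x
    rw [taylor_within_apply, Finset.sum_range_succ, Finset.sum_eq_zero, zero_add]
    · simp only [iteratedDerivWithin_univ, smul_eq_mul]
      ring
    · intro j hj
      simp [iteratedDerivWithin_univ, h j (Finset.mem_range.mp hj)]
  have h0 := ((taylor_isLittleO_univ (x₀ := a) hf).mono
    (nhdsWithin_le_nhds (s := {a}ᶜ))).tendsto_div_nhds_zero
  have h1 := h0.add_const (iteratedDeriv n f a / n.factorial)
  rw [zero_add] at h1
  refine h1.congr' ?_
  filter_upwards [self_mem_nhdsWithin] with x hx
  have hx' : x - a ≠ 0 := sub_ne_zero.mpr hx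
  rw [hT]
  field_simp
  ring

open Filter Topology in
/-- If `f` vanishes to order `n` at `a`, then `(x - a) * f' x` is, to leading order,
`n * f⁽ⁿ⁾(a) / n! * (x - a) ^ n`. -/
theorem tendsto_sub_mul_deriv_div_pow {f : ℝ → ℝ} {a : ℝ} {n : ℕ}
    (hf : ContDiff ℝ (n + 1) f) (h : ∀ j < n, iteratedDeriv j f a = 0) :
    Tendsto (fun x => (x - a) * deriv f x / (x - a) ^ n) (𝓝[≠] a)
      (𝓝 (n * (iteratedDeriv n f a / n.factorial))) := by
  have hf' : ContDiff ℝ n (deriv f) := (contDiff_succ_iff_deriv.mp hf).2.2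
  rcases n with _ | m
  · have hc : Continuous fun x => (x - a) * deriv f x := by
      have := hf'.continuous
      fun_prop
    simpa using (hc.tendsto a).mono_left nhdsWithin_le_nhds
  · have key := tendsto_div_pow_of_iteratedDeriv_eq_zero (f := deriv f) (a := a) (n := m)
      (hf'.of_le (by exact_mod_cast m.le_succ))
      (fun j hj => by rw [← iteratedDeriv_succ']; exact h _ (by lia))
    rw [← iteratedDeriv_succ'] at key
    have hlim : ((m + 1 : ℕ) : ℝ) * (iteratedDeriv (m + 1) f a / (m + 1).factorial)
        = iteratedDeriv (m + 1) f a / m.factorial := by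
      have := m.factorial_ne_zero
      rw [Nat.factorial_succ]
      push_cast
      field_simp
    rw [hlim]
    refine key.congr' ?_
    filter_upwards [self_mem_nhdsWithin] with x hx
    have hx' : x - a ≠ 0 := sub_ne_zero.mpr hx
    field_simp
    ring

/-- **Limit of the second derivative of the mean exit time profile.** Let `θ : ℝ → ℝ` be `C^∞`,
positive on `[0, R)`, vanishing to exact order `d` at `R`. Then the derivative of
`q(r) = (∫_r^R θ) / θ(r)` tends to `-1/(d+1)` as `r → R⁻`. -/
theorem deriv_exit_time_profile_tendsto
    (R : ℝ) (hR : 0 < R) (d : ℕ) (θ : ℝ → ℝ)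
    (hθ : ContDiff ℝ (⊤ : ℕ∞) θ)
    (hpos : ∀ r ∈ Set.Ico (0 : ℝ) R, 0 < θ r)
    (hvanish : ∀ j < d, iteratedDeriv j θ R = 0)
    (hd : iteratedDeriv d θ R ≠ 0)
    (q : ℝ → ℝ)
    (hq : ∀ r : ℝ, q r = (∫ s in r..R, θ s) / θ r) :
    Filter.Tendsto (deriv q) (nhdsWithin R (Set.Iio R)) (nhds (-1 / ((d : ℝ) + 1))) := by
  set G : ℝ → ℝ := fun r => ∫ s in R..r, θ s with hG
  have hGθ : ∀ r, HasDerivAt G (θ r) r := fun r =>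
    hθ.continuous.integral_hasStrictDerivAt R r |>.hasDerivAt
  have hG' : deriv G = θ := funext fun r => (hGθ r).deriv
  have hθd : ∀ n : ℕ, ContDiff ℝ n θ := fun n => hθ.of_le (by exact_mod_cast le_top)
  have hGd : ContDiff ℝ ((d + 1 : ℕ) : WithTop ℕ∞) G := by
    push_cast
    refine contDiff_succ_iff_deriv.mpr ⟨fun r => (hGθ r).differentiableAt, by simp, ?_⟩
    rw [hG']
    exact hθd d
  have limG := tendsto_div_pow_of_iteratedDeriv_eq_zero (a := R) hGd (by
    rintro (_ | j) hj
    · simp [hG]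
    · rw [iteratedDeriv_succ', hG']
      exact hvanish j (by lia))
  rw [iteratedDeriv_succ', hG'] at limG
  have limθ := tendsto_div_pow_of_iteratedDeriv_eq_zero (hθd d) hvanish
  have limθ' := tendsto_sub_mul_deriv_div_pow (by exact_mod_cast hθd (d + 1)) hvanish
  have hfac : (d.factorial : ℝ) ≠ 0 := by exact_mod_cast d.factorial_ne_zero
  have lim := (((limG.mul limθ').div (limθ.pow 2)
    (pow_ne_zero 2 (div_ne_zero hd hfac))).sub_const 1).mono_left
      (nhdsWithin_mono R (s := Set.Iio R) fun x hx => ne_of_lt hx)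
  have hval : iteratedDeriv d θ R / (d + 1).factorial *
      (d * (iteratedDeriv d θ R / d.factorial)) / (iteratedDeriv d θ R / d.factorial) ^ 2 - 1
        = -1 / ((d : ℝ) + 1) := by
    have : (d : ℝ) + 1 ≠ 0 := by positivity
    rw [Nat.factorial_succ]
    push_cast
    field_simp
    ring
  rw [hval] at lim
  refine lim.congr' ?_
  filter_upwards [Ioo_mem_nhdsLT hR] with r hr
  have hθr : θ r ≠ 0 := (hpos r ⟨hr.1.le, hr.2⟩).ne'
  have hrR : r - R ≠ 0 := sub_ne_zero.mpr hr.2.ne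
  have hqG : q = fun r => -G r / θ r := funext fun x => by
    rw [hq, hG, intervalIntegral.integral_symm]
  have hdq := (hGθ r).neg.div
    ((hθ.differentiable (by simp)) r).hasDerivAt hθr
  rw [hqG]
  refine Eq.trans ?_ hdq.deriv.symm
  simp only [Pi.neg_apply, Pi.div_apply]
  generalize r - R = u at hrR ⊢
  field_simp
  ring
end

section
/- Let E be a finite-dimensional real normed vector space, let k ∈ ℕ, and let φ : ℝ × E → ℝ be C^∞. Suppose there are constants c_0, …, c_k ∈ ℝ such that for every j ≤ k and every y ∈ E, the j-th derivative of r ↦ φ(r,y) at r = 0 equals c_j (i.e. iteratedDeriv j (fun r => φ (r, y)) 0 = c j). Then there exist a C^∞ function ψ : ℝ → ℝ and a C^∞ function f : ℝ × E → ℝ such that φ(r,y) = ψ(r) + r^{k+1} · f(r,y) for all (r,y) ∈ ℝ × E. -/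
section ParametricIntegral

variable {H G : Type*} [NormedAddCommGroup H] [NormedSpace ℝ H] [FiniteDimensional ℝ H]
  [NormedAddCommGroup G] [NormedSpace ℝ G] {F : H × ℝ → G}

/-- Differentiation under the integral sign over a compact interval, for a `C^1` integrand. -/
theorem ContDiff.hasFDerivAt_intervalIntegral (hF : ContDiff ℝ 1 F) (a b : ℝ) (x : H) :
    HasFDerivAt (fun x => ∫ t in a..b, F (x, t))
      (∫ t in a..b, (fderiv ℝ F (x, t)).comp (ContinuousLinearMap.inl ℝ H ℝ)) x := by
  have : ProperSpace H := FiniteDimensional.proper ℝ H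
  have hcont : Continuous fun p : H × ℝ =>
      (fderiv ℝ F p).comp (ContinuousLinearMap.inl ℝ H ℝ) :=
    (hF.continuous_fderiv one_ne_zero).clm_comp continuous_const
  obtain ⟨C, hC⟩ := ((isCompact_closedBall x 1).prod
    (isCompact_uIcc (a := a) (b := b))).exists_bound_of_continuousOn hcont.continuousOn
  refine intervalIntegral.hasFDerivAt_integral_of_dominated_of_fderiv_le
    (F' := fun x t => (fderiv ℝ F (x, t)).comp (ContinuousLinearMap.inl ℝ H ℝ))
    (bound := fun _ => C) (Metric.closedBall_mem_nhds x one_pos) ?_ ?_ ?_ ?_ ?_ ?_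
  · exact .of_forall fun z => (hF.continuous.comp (by fun_prop)).aestronglyMeasurable
  · exact (hF.continuous.comp (by fun_prop : Continuous fun t : ℝ => (x, t))).intervalIntegrable _ _
  · exact (hcont.comp (by fun_prop : Continuous fun t : ℝ => (x, t))).aestronglyMeasurable
  · exact .of_forall fun t ht z hz => hC (z, t) ⟨hz, Set.uIoc_subset_uIcc ht⟩
  · exact intervalIntegrable_const
  · exact .of_forall fun t _ z _ =>
      ((hF.differentiable one_ne_zero) (z, t)).hasFDerivAt.comp z (hasFDerivAt_prodMk_left z t)

theorem ContDiff.intervalIntegral_param_nat [CompleteSpace G] {n : ℕ} (hF : ContDiff ℝ n F)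
    (a b : ℝ) : ContDiff ℝ n fun x => ∫ t in a..b, F (x, t) := by
  induction n generalizing F with
  | zero =>
    exact contDiff_zero.2 <|
      intervalIntegral.continuous_parametric_intervalIntegral_of_continuous'
        (f := fun x t => F (x, t)) hF.continuous a b
  | succ n ih =>
    have hF1 : ContDiff ℝ 1 F := hF.of_le (by norm_cast; omega)
    have hderiv := hF1.hasFDerivAt_intervalIntegral a b
    push_cast at hF ⊢
    refine contDiff_succ_iff_fderiv_apply.2
      ⟨fun x => (hderiv x).differentiableAt, by simp, fun v => ?_⟩
    have heq : (fun x => fderiv ℝ (fun x => ∫ t in a..b, F (x, t)) x v) =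
        fun x => ∫ t in a..b, fderiv ℝ F (x, t) (v, 0) := by
      ext x
      rw [(hderiv x).fderiv, ContinuousLinearMap.intervalIntegral_apply]
      · simp
      · refine Continuous.intervalIntegrable ?_ _ _
        exact ((hF1.continuous_fderiv one_ne_zero).comp
          (by fun_prop : Continuous fun t : ℝ => (x, t))).clm_comp continuous_const
    rw [heq]
    exact ih (F := fun p => fderiv ℝ F p (v, 0))
      ((hF.fderiv_right le_rfl).clm_apply contDiff_const)

/-- An integral over a compact interval depends smoothly on parameters if the integrand is jointly
smooth. -/
theorem ContDiff.intervalIntegral_param [CompleteSpace G] {n : ℕ∞} (hF : ContDiff ℝ n F)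
    (a b : ℝ) : ContDiff ℝ n fun x => ∫ t in a..b, F (x, t) :=
  contDiff_iff_forall_nat_le.2 fun _ hm =>
    (hF.of_le (by exact_mod_cast hm)).intervalIntegral_param_nat a b

end ParametricIntegral

/-- The iterated derivatives of a function along a line are iterated directional derivatives. -/
theorem ContDiff.iteratedDeriv_comp_add_smul {𝕜 E F : Type*} [NontriviallyNormedField 𝕜]
    [NormedAddCommGroup E] [NormedSpace 𝕜 E] [NormedAddCommGroup F] [NormedSpace 𝕜 F]
    {f : E → F} {n : ℕ} (hf : ContDiff 𝕜 n f) (x v : E) (t : 𝕜) :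
    iteratedDeriv n (fun s : 𝕜 => f (x + s • v)) t =
      iteratedFDeriv 𝕜 n f (x + t • v) (fun _ => v) := by
  induction n generalizing t with
  | zero => simp
  | succ n ih =>
    rw [iteratedDeriv_succ, funext (ih (hf.of_le (by norm_cast; omega)))]
    exact ContDiffAt.deriv_fderiv_add_smul (by exact_mod_cast hf.contDiffAt)


/-- **Taylor splitting of functions of level at least `k`.** If `φ : ℝ × E → ℝ` is `C^∞` and,
for each `j ≤ k`, the `j`-th derivative of `r ↦ φ(r, y)` at `r = 0` is a constant `c j`
independent of `y`, then `φ(r, y) = ψ(r) + r^(k+1) · f(r, y)` for some `C^∞` functions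
`ψ : ℝ → ℝ` and `f : ℝ × E → ℝ`. -/
theorem level_k_splitting
    {E : Type*} [NormedAddCommGroup E] [NormedSpace ℝ E] [FiniteDimensional ℝ E]
    (k : ℕ) (φ : ℝ × E → ℝ) (hφ : ContDiff ℝ (⊤ : ℕ∞) φ)
    (c : ℕ → ℝ)
    (hc : ∀ j ≤ k, ∀ y : E, iteratedDeriv j (fun r => φ (r, y)) 0 = c j) :
    ∃ ψ : ℝ → ℝ, ∃ f : ℝ × E → ℝ,
      ContDiff ℝ (⊤ : ℕ∞) ψ ∧ ContDiff ℝ (⊤ : ℕ∞) f ∧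
      ∀ r : ℝ, ∀ y : E, φ (r, y) = ψ r + r ^ (k + 1) * f (r, y) := by
  set e : ℝ × E := (1, 0)
  have hsmooth (n : ℕ) : ContDiff ℝ n φ := hφ.of_le (by exact_mod_cast le_top)
  have hcoeff (j : ℕ) (hj : j ≤ k) (y : E) :
      iteratedFDeriv ℝ j φ (0, y) (fun _ => e) = c j := by
    rw [← hc j hj y]
    simpa [e] using ((hsmooth j).iteratedDeriv_comp_add_smul (0, y) e (0 : ℝ)).symm
  have hscale (j : ℕ) (p : ℝ × E) (r : ℝ) :
      iteratedFDeriv ℝ j φ p (fun _ => r • e) =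
        r ^ j * iteratedFDeriv ℝ j φ p (fun _ => e) := by
    simpa using (iteratedFDeriv ℝ j φ p).map_smul_univ (fun _ => r) (fun _ => e)
  refine ⟨fun r => ∑ j ∈ Finset.range (k + 1), (j.factorial : ℝ)⁻¹ * (r ^ j * c j),
    fun p => (k.factorial : ℝ)⁻¹ * ∫ t in (0 : ℝ)..1,
      (1 - t) ^ k * iteratedFDeriv ℝ (k + 1) φ (t * p.1, p.2) (fun _ => e), ?_, ?_, ?_⟩
  · fun_prop
  · have hD : ContDiff ℝ (⊤ : ℕ∞) fun p => iteratedFDeriv ℝ (k + 1) φ p (fun _ => e) :=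
      (ContinuousMultilinearMap.apply ℝ (fun _ : Fin (k + 1) => ℝ × E) ℝ
        (fun _ => e)).contDiff.comp (hφ.iteratedFDeriv_right (by exact_mod_cast le_top))
    refine contDiff_const.mul (ContDiff.intervalIntegral_param (F := fun q : (ℝ × E) × ℝ =>
      (1 - q.2) ^ k * iteratedFDeriv ℝ (k + 1) φ (q.2 * q.1.1, q.1.2) (fun _ => e)) ?_ 0 1)
    exact ContDiff.mul (by fun_prop)
      (hD.comp (by fun_prop : ContDiff ℝ _ fun q : (ℝ × E) × ℝ => (q.2 * q.1.1, q.1.2)))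
  · intro r y
    have htaylor := map_add_eq_sum_add_integral_iteratedFDeriv (f := φ) (x := (0, y))
      (y := r • e) (n := k) fun t _ => by exact_mod_cast (hsmooth (k + 1)).contDiffAt
    have hpoint : ((0, y) : ℝ × E) + r • e = (r, y) := by simp [e]
    have hpath (t : ℝ) : ((0, y) : ℝ × E) + t • r • e = (t * r, y) := by simp [e]
    simp only [hpoint, hpath, hscale, smul_eq_mul] at htaylor
    rw [htaylor]
    congr 1
    · exact Finset.sum_congr rfl fun j hj => by
        rw [hcoeff j (Finset.mem_range_succ_iff.1 hj)]
    · simp only [mul_left_comm _ (r ^ (k + 1)), intervalIntegral.integral_const_mul]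
end
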